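/- For every tuple w̄ of words and every n-tuple z̄ of words, |MCAT_C(w̄, z̄) \ MCAT_C(w̄)| ≤ 2n, i.e. appending n further words to a tuple enlarges its maximal common ancestor tree over C by at most 2n elements. -/

import Mathlib

/-!
Longest common prefixes are ultrametric: among the pairwise longest common prefixes of three
words, two coincide and are prefixes of the third. Consequently an iterated longest common prefix
of a family is already the longest common prefix of two of its members (`listLCP_mem_tree`), so
the maximal common ancestor tree depends only on the set `S` of entries and equals
`tree S = {ε} ∪ {a ⊓ b : a, b ∈ S}` (`MCAT_eq_tree`).

Adding one word `z` to `S` creates at most two new nodes (`encard_tree_insert`). One is `z`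
itself; the others have the form `z ⊓ a` with `a ∈ S`. If `z ⊓ a ≠ z ⊓ b`, then the shorter of the
two equals `a ⊓ b` and is therefore old (`lcp_ultra`), so all new nodes of this form coincide.
Induction on the number of added words gives the bound `2n`.
-/

namespace CLTL

/-- A word is a finite sequence of rationals. -/
abbrev Word := List ℚ

/-- Lexicographic order on lists over a linear order: `w ⊑ v` iff `w` is a prefix of `v`,
or they branch at some position with the letter of `w` smaller. -/
def lexLe {α : Type*} [LinearOrder α] (w v : List α) : Prop :=
  w <+: v ∨ ∃ (p : List α) (a b : α), a < b ∧ (p ++ [a]) <+: w ∧ (p ++ [b]) <+: v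

/-- Longest common prefix of two lists. -/
def lcp {α : Type*} [DecidableEq α] : List α → List α → List α
  | a :: w, b :: v => if a = b then a :: lcp w v else []
  | _, _ => []

/-- Iterated longest common prefix of a nonempty list of words. -/
def listLCP : List Word → Word
  | [] => []
  | [x] => x
  | x :: xs => lcp x (listLCP xs)

/-- Insertion of an `m`-gap at `u`. -/
def iota (u : Word) (m : ℕ) (w : Word) : Word :=
  if u <+: w then u ++ List.replicate m 0 ++ w.drop u.length else w

/-- The maximal common ancestor tree of a tuple `w` together with constants `C`:
`{ε}` together with all iterated longest common prefixes of nonempty subsets of entries. -/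
def MCAT (C : List Word) {k : ℕ} (w : Fin k → Word) : Set Word :=
  insert [] { x | ∃ I : Finset (Fin (k + C.length)),
    I.Nonempty ∧ x = listLCP (I.toList.map (Fin.append w C.get)) }

/-- `h` is the induced isomorphism witnessing `typ_C(w) = typ_C(v)`. -/
def IsInducedIso (C : List Word) {k : ℕ} (w v : Fin k → Word) (h : Word → Word) : Prop :=
  Set.BijOn h (MCAT C w) (MCAT C v) ∧
  (∀ x ∈ MCAT C w, ∀ y ∈ MCAT C w,
    (x <+: y ↔ h x <+: h y) ∧ (lexLe x y ↔ lexLe (h x) (h y))) ∧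
  (∀ c ∈ C, h c = c) ∧
  (∀ i : Fin k, h (w i) = v i)

/-- `typ_C(w) = typ_C(v)`. -/
def SameTyp (C : List Word) {k : ℕ} (w v : Fin k → Word) : Prop :=
  ∃ h : Word → Word, IsInducedIso C w v h

/-- The stretching condition on an isomorphism `h` of `MCAT_C(w)`:
`|h e| - |h d| ≥ |e| - |d|` whenever `d` is a proper prefix of `e`. -/
def StretchCond (C : List Word) {k : ℕ} (w : Fin k → Word) (h : Word → Word) : Prop :=
  ∀ d ∈ MCAT C w, ∀ e ∈ MCAT C w, d <+: e → d ≠ e →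
    e.length + (h d).length ≤ (h e).length + d.length

/-- `w ≼* v` for tuples of words. -/
def Stretch (C : List Word) {k : ℕ} (w v : Fin k → Word) : Prop :=
  ∃ h : Word → Word, IsInducedIso C w v h ∧ StretchCond C w h

/-- `≼*` on configurations. -/
def ConfigLe (C : List Word) {Q : Type*} {n : ℕ}
    (c d : Q × (Fin n → Word)) : Prop :=
  c.1 = d.1 ∧ Stretch C c.2 d.2

/-- A transition relation is type-invariant. -/
def TypeInvariant (C : List Word) {Q : Type*} {n : ℕ}
    (step : (Q × (Fin n → Word)) → (Q × (Fin n → Word)) → Prop) : Prop :=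
  ∀ (q p : Q) (w v w' v' : Fin n → Word),
    step (q, w) (p, v) → SameTyp C (Fin.append w v) (Fin.append w' v') →
      step (q, w') (p, v')

/-- Finite runs, indexed by `Fin (N+1)`. -/
def IsFinRun {Q : Type*} {n : ℕ}
    (step : (Q × (Fin n → Word)) → (Q × (Fin n → Word)) → Prop)
    {N : ℕ} (r : Fin (N + 1) → Q × (Fin n → Word)) : Prop :=
  ∀ i : Fin N, step (r i.castSucc) (r i.succ)

/-- Infinite runs. -/
def IsInfRun {Q : Type*} {n : ℕ}
    (step : (Q × (Fin n → Word)) → (Q × (Fin n → Word)) → Prop)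
    (r : ℕ → Q × (Fin n → Word)) : Prop :=
  ∀ i : ℕ, step (r i) (r (i + 1))

/-- The pair `(w, v)` (of tuples of equal type) is contracting. -/
def ContractingPair (C : List Word) {k : ℕ} (w v : Fin k → Word) : Prop :=
  ∃ h : Word → Word, IsInducedIso C w v h ∧
    ((∃ d ∈ MCAT C w, h d <+: d ∧ h d ≠ d) ∨
     (∃ d ∈ MCAT C w, ∃ e ∈ MCAT C w,
        d <+: e ∧ d ≠ e ∧ h e = e ∧ d <+: h d ∧ d ≠ h d))

/-- A set of words `T` has `n`-gaps above `B`. -/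
def HasGaps (n : ℕ) (T B : Set Word) : Prop :=
  ∀ d ∈ T, ∀ e ∈ T, d <+: e → d ≠ e → (∀ b ∈ B, ¬ e <+: b) → n + d.length < e.length

lemma lcp_self (a : Word) : lcp a a = a := by
  induction a with
  | nil => simp [lcp]
  | cons x a ih => simp [lcp, ih]

lemma lcp_comm (a b : Word) : lcp a b = lcp b a := by
  induction a generalizing b with
  | nil => cases b <;> simp [lcp]
  | cons x a ih =>
    cases b with
    | nil => simp [lcp]
    | cons y b =>
      by_cases h : x = y
      · subst h; simp [lcp, ih b]
      · simp [lcp, h, Ne.symm h]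

/-- A threefold longest common prefix is attained by a pair, since `x ⊓ a` and `a ⊓ b` are both
prefixes of `a`, hence comparable. -/
lemma lcp_lcp (x a b : Word) : lcp x (lcp a b) = lcp x a ∨ lcp x (lcp a b) = lcp a b := by
  induction a generalizing x b with
  | nil => simp [lcp]
  | cons c a ih =>
    rcases x with _ | ⟨d, x⟩
    · simp [lcp]
    rcases b with _ | ⟨e, b⟩
    · simp [lcp]
    have := ih x b
    simp only [lcp]
    split_ifs <;> simp_all [lcp]

/-- Two distinct branching points of `z` with `a` and `b`: the shorter one is `a ⊓ b`. -/
lemma lcp_ultra (z a b : Word) :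
    lcp z a = lcp z b ∨ lcp z a = lcp a b ∨ lcp z b = lcp a b := by
  induction z generalizing a b with
  | nil => simp [lcp]
  | cons c z ih =>
    rcases a with _ | ⟨d, a⟩
    · simp [lcp]
    rcases b with _ | ⟨e, b⟩
    · simp [lcp]
    have := ih a b
    simp only [lcp]
    split_ifs <;> simp_all

/-- The maximal common ancestor tree of a set of words, described by pairwise longest common
prefixes. The case `a = b` yields the members of `S` themselves. -/
def tree (S : Set Word) : Set Word :=
  insert [] {x | ∃ a ∈ S, ∃ b ∈ S, x = lcp a b}

lemma listLCP_mem_tree (S : Set Word) (l : List Word) (hl : ∀ x ∈ l, x ∈ S) :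
    listLCP l ∈ tree S := by
  induction l with
  | nil => exact Or.inl rfl
  | cons x xs ih =>
    have hx : x ∈ S := hl x (by simp)
    rcases xs with _ | ⟨y, ys⟩
    · exact Or.inr ⟨x, hx, x, hx, (lcp_self x).symm⟩
    · have h := ih (fun u hu => hl u (List.mem_cons_of_mem _ hu))
      change lcp x (listLCP (y :: ys)) ∈ tree S
      rcases h with h | ⟨a, ha, b, hb, h⟩
      · rw [h]
        left
        cases x <;> simp [lcp]
      · rw [h]
        rcases lcp_lcp x a b with h' | h'
        · exact Or.inr ⟨x, hx, a, ha, h'⟩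
        · exact Or.inr ⟨a, ha, b, hb, h'⟩

lemma range_fin_append {m n : ℕ} (f : Fin m → Word) (g : Fin n → Word) :
    Set.range (Fin.append f g) = Set.range f ∪ Set.range g := by
  ext x
  constructor
  · rintro ⟨i, rfl⟩
    refine Fin.addCases (fun i => ?_) (fun i => ?_) i <;> simp
  · rintro (⟨i, rfl⟩ | ⟨i, rfl⟩)
    · exact ⟨Fin.castAdd n i, by simp⟩
    · exact ⟨Fin.natAdd m i, by simp⟩

lemma MCAT_eq_tree (C : List Word) {k : ℕ} (w : Fin k → Word) :
    MCAT C w = tree (Set.range w ∪ Set.range C.get) := by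
  rw [← range_fin_append]
  ext x
  constructor
  · rintro (rfl | ⟨I, -, rfl⟩)
    · exact Or.inl rfl
    · apply listLCP_mem_tree
      intro x hx
      obtain ⟨i, -, rfl⟩ := List.mem_map.1 hx
      exact ⟨i, rfl⟩
  · rintro (rfl | ⟨_, ⟨i, rfl⟩, _, ⟨j, rfl⟩, rfl⟩)
    · exact Or.inl rfl
    · right
      refine ⟨{i, j}, by simp, ?_⟩
      by_cases hij : i = j
      · subst hij
        simp [listLCP, lcp_self]
      · -- `Finset.toList` lists the pair in an unspecified order
        have hp : ({i, j} : Finset (Fin (k + C.length))).toList.Perm [i, j] := by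
          have := Finset.toList_insert (s := {j}) (a := i) (by simpa using hij)
          simpa using this
        rcases List.perm_pair.1 hp with h | h
        · rw [h]; rfl
        · rw [h]; exact lcp_comm _ _

lemma encard_tree_insert (S : Set Word) (z : Word) :
    (tree (insert z S) \ tree S).encard ≤ 2 := by
  set N : Set Word := {x | x ∉ tree S ∧ ∃ a ∈ S, x = lcp z a} with hN
  have hsub : tree (insert z S) \ tree S ⊆ {z} ∪ N := by
    rintro x ⟨hx | ⟨a, ha, b, hb, rfl⟩, hxS⟩
    · exact absurd (Or.inl hx) hxS
    · rcases ha with rfl | ha <;> rcases hb with rfl | hb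
      · exact Or.inl (lcp_self _)
      · exact Or.inr ⟨hxS, b, hb, rfl⟩
      · exact Or.inr ⟨hxS, a, ha, lcp_comm _ _⟩
      · exact absurd (Or.inr ⟨a, ha, b, hb, rfl⟩) hxS
  have hN1 : N.encard ≤ 1 := by
    rw [Set.encard_le_one_iff]
    rintro _ _ ⟨h1, a, ha, rfl⟩ ⟨h2, b, hb, rfl⟩
    rcases lcp_ultra z a b with h | h | h
    · exact h
    · exact absurd (Or.inr ⟨a, ha, b, hb, h⟩) h1
    · exact absurd (Or.inr ⟨a, ha, b, hb, h⟩) h2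
  calc (tree (insert z S) \ tree S).encard ≤ ({z} ∪ N).encard := Set.encard_le_encard hsub
    _ ≤ ({z} : Set Word).encard + N.encard := Set.encard_union_le _ _
    _ ≤ 1 + 1 := add_le_add (by simp) hN1
    _ = 2 := by norm_num

lemma encard_tree_union (S : Set Word) {n : ℕ} (z : Fin n → Word) :
    (tree (S ∪ Set.range z) \ tree S).encard ≤ (2 * n : ℕ) := by
  induction n with
  | zero => simp
  | succ n ih =>
    have hr : S ∪ Set.range z = insert (z 0) (S ∪ Set.range (Fin.tail z)) := by
      conv_lhs => rw [← Fin.cons_self_tail z, Fin.range_cons]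
      rw [Set.union_insert]
    rw [hr]
    set U := S ∪ Set.range (Fin.tail z)
    calc (tree (insert (z 0) U) \ tree S).encard
        ≤ ((tree (insert (z 0) U) \ tree U) ∪ (tree U \ tree S)).encard :=
          Set.encard_le_encard (sdiff_triangle _ _ _)
      _ ≤ _ := Set.encard_union_le _ _
      _ ≤ 2 + (2 * n : ℕ) := add_le_add (encard_tree_insert U (z 0)) (ih (Fin.tail z))
      _ = (2 * (n + 1) : ℕ) := by push_cast; ring

/-- Appending `n` further words to a tuple enlarges its maximal common ancestor tree over
`C` by at most `2n` elements. -/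
theorem stmt15 (C : List Word) (hC : ∀ c ∈ C, ∀ c' : Word, c' <+: c → c' ∈ C)
    {k n : ℕ} (w : Fin k → Word) (z : Fin n → Word) :
    (MCAT C (Fin.append w z) \ MCAT C w).Finite ∧
    (MCAT C (Fin.append w z) \ MCAT C w).ncard ≤ 2 * n := by
  have h := encard_tree_union (Set.range w ∪ Set.range C.get) z
  rw [Set.union_right_comm, ← range_fin_append w z, ← MCAT_eq_tree, ← MCAT_eq_tree] at h
  have hfin := Set.finite_of_encard_le_coe h
  refine ⟨hfin, ?_⟩
  rw [← hfin.cast_ncard_eq] at h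
  exact_mod_cast h

end CLTL
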